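/- Fix real numbers a < b, T > 0 and integers M, N ≥ 1; set h = (b−a)/M, τ = T/N, grid points x_i = a + i·h for i = 0,…,M, and time levels t_k = k·τ for k = 0,…,N. Let φ : ℝ × ℝ × ℝⁿ × ℝ × ℝ → ℝⁿ satisfy ‖φ(t,x,y,τ,h) − φ(t,x,z,τ,h)‖_∞ ≤ L‖y − z‖_∞ for some L > 0 and all arguments. Let d_{k,i} ∈ [a,b] be given departure points, let y : [0,T] × [a,b] → ℝⁿ, write Y^k for the nodal values (y(t_k, x_0),…,y(t_k, x_M)), and suppose there is ε ≥ 0 such that for all k = 0,…,N−1 and i = 0,…,M the local truncation bound ‖y(t_{k+1}, x_i) − P[Y^k](d_{k,i}) − τ·φ(t_k, d_{k,i}, P[Y^k](d_{k,i}), τ, h)‖_∞ ≤ τ·ε holds. If the nodal values (u^k_i) are generated by the one-step semi-Lagrangian method u^{k+1}_i = P[u^k](d_{k,i}) + τ·φ(t_k, d_{k,i}, P[u^k](d_{k,i}), τ, h), then for every k = 0,…,N, max_{0 ≤ i ≤ M} ‖u^k_i − y(t_k, x_i)‖_∞ ≤ e^{T·L} · max_{0 ≤ i ≤ M} ‖u^0_i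 − y(0, x_i)‖_∞ + (ε/L)·(e^{T·L} − 1). -/

import Mathlib

/-- The piecewise linear interpolant of the nodal values `w 0, …, w M` on the
uniform grid `x i = a + i*h`: on `[x i, x (i+1)]` it equals
`w i + ((x - x i)/h) • (w (i+1) - w i)`. -/
noncomputable def plin (n : ℕ) (a h : ℝ) (M : ℕ) (w : ℕ → Fin n → ℝ) (x : ℝ) :
    Fin n → ℝ :=
  let i := min (M - 1) (Nat.floor ((x - a) / h))
  w i + ((x - (a + (i : ℝ) * h)) / h) • (w (i + 1) - w i)

/-! Linear interpolation is linear in the nodal values and takes its values in their convex hull, so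
it does not increase the maximum norm. One step of the method therefore amplifies the difference
of two grid functions by at most `1 + τL`. If `e k` is the maximum nodal error at time level `k`,
then `e (k + 1) ≤ (1 + τL) e k + τε`. Shifting by the fixed point `-ε/L` of this recursion makes it
geometric, and `(1 + τL) ^ k ≤ exp (kτL) ≤ exp (TL)`. -/

section Gronwall

variable {e : ℕ → ℝ} {c δ : ℝ} {k : ℕ}

theorem add_div_le_one_add_pow_mul (hc : 0 < c)
    (he : ∀ j < k, e (j + 1) ≤ (1 + c) * e j + δ) :
    e k + δ / c ≤ (1 + c) ^ k * (e 0 + δ / c) := by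
  refine le_geom (u := fun j => e j + δ / c) (by positivity) k fun j hj => ?_
  calc e (j + 1) + δ / c ≤ (1 + c) * e j + δ + δ / c := by gcongr; exact he j hj
    _ = (1 + c) * (e j + δ / c) := by field_simp; ring

theorem le_exp_mul_add_of_succ_le_one_add_mul_add {S : ℝ} (hc : 0 < c) (hδ : 0 ≤ δ)
    (he₀ : 0 ≤ e 0) (he : ∀ j < k, e (j + 1) ≤ (1 + c) * e j + δ) (hS : k * c ≤ S) :
    e k ≤ Real.exp S * e 0 + δ / c * (Real.exp S - 1) := by
  have hpow : (1 + c) ^ k ≤ Real.exp S := calc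
    (1 + c) ^ k ≤ Real.exp c ^ k := by gcongr; linarith [Real.add_one_le_exp c]
    _ = Real.exp (k * c) := (Real.exp_nat_mul c k).symm
    _ ≤ Real.exp S := Real.exp_le_exp.2 hS
  have hshift : e k + δ / c ≤ Real.exp S * (e 0 + δ / c) :=
    (add_div_le_one_add_pow_mul hc he).trans (by gcongr)
  linarith

end Gronwall

theorem norm_add_smul_sub_add_smul_le {E : Type*} [SeminormedAddCommGroup E] [NormedSpace ℝ E]
    {f : E → E} {L τ : ℝ} {p q : E} (hτ : 0 ≤ τ) (hf : ‖f p - f q‖ ≤ L * ‖p - q‖) :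
    ‖(p + τ • f p) - (q + τ • f q)‖ ≤ (1 + τ * L) * ‖p - q‖ := by
  calc ‖(p + τ • f p) - (q + τ • f q)‖ = ‖(p - q) + τ • (f p - f q)‖ := by
        rw [add_sub_add_comm, smul_sub]
    _ ≤ ‖p - q‖ + τ * ‖f p - f q‖ := by
        simpa only [norm_smul, Real.norm_of_nonneg hτ] using norm_add_le (p - q) (τ • (f p - f q))
    _ ≤ ‖p - q‖ + τ * (L * ‖p - q‖) := by gcongr
    _ = (1 + τ * L) * ‖p - q‖ := by ring

section GridError

variable {E : Type*} [SeminormedAddCommGroup E] {M : ℕ} {w w' : ℕ → E} {C : ℝ}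

/-- The maximum-norm distance of two grid functions on the nodes `0, …, M`; their values at larger
indices are ignored. -/
noncomputable def gridError (M : ℕ) (w w' : ℕ → E) : ℝ :=
  (Finset.range (M + 1)).sup' Finset.nonempty_range_add_one fun j => ‖w j - w' j‖

theorem gridError_le_iff : gridError M w w' ≤ C ↔ ∀ i ≤ M, ‖w i - w' i‖ ≤ C := by
  simp only [gridError, Finset.sup'_le_iff, Finset.mem_range, Nat.lt_succ_iff]

theorem norm_sub_le_gridError {i : ℕ} (hi : i ≤ M) : ‖w i - w' i‖ ≤ gridError M w w' :=
  gridError_le_iff.1 le_rfl i hi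

theorem gridError_nonneg : 0 ≤ gridError M w w' :=
  (norm_nonneg (w 0 - w' 0)).trans (norm_sub_le_gridError M.zero_le)

end GridError

section Interpolation

/-- The index `i` of the cell `[i, i + 1]` of the unit grid on `[0, M]` that `plin` uses at the
rescaled coordinate `s`. The right endpoint `s = M` belongs to the last cell. -/
noncomputable def cellIndex (M : ℕ) (s : ℝ) : ℕ :=
  min (M - 1) ⌊s⌋₊

theorem cellIndex_lt {M : ℕ} (hM : 0 < M) (s : ℝ) : cellIndex M s < M :=
  (min_le_left _ _).trans_lt (Nat.sub_one_lt_of_lt hM)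

theorem sub_cellIndex_mem_Icc {M : ℕ} {s : ℝ} (hs : s ∈ Set.Icc 0 (M : ℝ)) :
    s - cellIndex M s ∈ Set.Icc (0 : ℝ) 1 := by
  have hle : (cellIndex M s : ℝ) ≤ s :=
    (Nat.cast_le.2 (min_le_right _ _)).trans (Nat.floor_le hs.1)
  have hge : s ≤ cellIndex M s + 1 := by
    rcases min_choice (M - 1) ⌊s⌋₊ with hlast | hfloor
    · calc s ≤ M := hs.2
        _ ≤ ((M - 1 : ℕ) : ℝ) + 1 := by exact_mod_cast le_tsub_add
        _ = cellIndex M s + 1 := by rw [cellIndex, hlast]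
    · rw [cellIndex, hfloor]
      exact (Nat.lt_floor_add_one s).le
  exact ⟨sub_nonneg.2 hle, sub_le_iff_le_add'.2 hge⟩

variable {n M : ℕ} {a h x : ℝ}

theorem plin_sub (w w' : ℕ → Fin n → ℝ) :
    plin n a h M (w - w') x = plin n a h M w x - plin n a h M w' x := by
  simp only [plin, Pi.sub_apply]
  module

theorem plin_eq_lineMap (hh : h ≠ 0) (w : ℕ → Fin n → ℝ) :
    plin n a h M w x =
      AffineMap.lineMap (w (cellIndex M ((x - a) / h))) (w (cellIndex M ((x - a) / h) + 1))
        ((x - a) / h - cellIndex M ((x - a) / h)) := by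
  have hlocal (i : ℝ) : (x - (a + i * h)) / h = (x - a) / h - i := by field_simp; ring
  simp only [plin, hlocal, cellIndex, AffineMap.lineMap_apply_module', add_comm]

theorem plin_mem_of_convex {s : Set (Fin n → ℝ)} (hs : Convex ℝ s) (hM : 0 < M) (hh : 0 < h)
    (hx : x ∈ Set.Icc a (a + M * h)) {w : ℕ → Fin n → ℝ} (hw : ∀ j ≤ M, w j ∈ s) :
    plin n a h M w x ∈ s := by
  have hscaled : (x - a) / h ∈ Set.Icc 0 (M : ℝ) :=
    ⟨div_nonneg (sub_nonneg.2 hx.1) hh.le, (div_le_iff₀ hh).2 (sub_le_iff_le_add'.2 hx.2)⟩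
  have hcell := cellIndex_lt hM ((x - a) / h)
  rw [plin_eq_lineMap hh.ne']
  exact hs.lineMap_mem (hw _ hcell.le) (hw _ hcell) (sub_cellIndex_mem_Icc hscaled)

theorem norm_plin_sub_plin_le_gridError (hM : 0 < M) (hh : 0 < h)
    (hx : x ∈ Set.Icc a (a + M * h)) (w w' : ℕ → Fin n → ℝ) :
    ‖plin n a h M w x - plin n a h M w' x‖ ≤ gridError M w w' := by
  rw [← plin_sub, ← mem_closedBall_zero_iff]
  exact plin_mem_of_convex (convex_closedBall _ _) hM hh hx fun j hj =>
    mem_closedBall_zero_iff.2 (norm_sub_le_gridError hj)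

end Interpolation

section SemiLagrangian

variable {n M : ℕ} {a h τ L x : ℝ} {Φ : ℝ → (Fin n → ℝ) → Fin n → ℝ}

/-- The value that one step of the semi-Lagrangian method computes from the nodal values `w` at a
node with departure point `x`. The increment function `Φ` is that of a single step: time and
step sizes are fixed in it. -/
noncomputable def semiLagrangianStep (a h : ℝ) (M : ℕ) (τ : ℝ)
    (Φ : ℝ → (Fin n → ℝ) → Fin n → ℝ) (w : ℕ → Fin n → ℝ) (x : ℝ) : Fin n → ℝ :=
  plin n a h M w x + τ • Φ x (plin n a h M w x)

theorem norm_semiLagrangianStep_sub_le (hM : 0 < M) (hh : 0 < h) (hτ : 0 ≤ τ) (hL : 0 ≤ L)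
    (hΦ : ∀ p q, ‖Φ x p - Φ x q‖ ≤ L * ‖p - q‖) (hx : x ∈ Set.Icc a (a + M * h))
    (w w' : ℕ → Fin n → ℝ) :
    ‖semiLagrangianStep a h M τ Φ w x - semiLagrangianStep a h M τ Φ w' x‖ ≤
      (1 + τ * L) * gridError M w w' :=
  (norm_add_smul_sub_add_smul_le hτ (hΦ _ _)).trans <| by
    gcongr
    exact norm_plin_sub_plin_le_gridError hM hh hx w w'

theorem gridError_semiLagrangianStep_le (hM : 0 < M) (hh : 0 < h) (hτ : 0 ≤ τ) (hL : 0 ≤ L)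
    (hΦ : ∀ x p q, ‖Φ x p - Φ x q‖ ≤ L * ‖p - q‖) {d : ℕ → ℝ}
    (hd : ∀ i ≤ M, d i ∈ Set.Icc a (a + M * h)) {u u' v v' : ℕ → Fin n → ℝ} {δ : ℝ}
    (hu : ∀ i ≤ M, u' i = semiLagrangianStep a h M τ Φ u (d i))
    (hv : ∀ i ≤ M, ‖v' i - semiLagrangianStep a h M τ Φ v (d i)‖ ≤ δ) :
    gridError M u' v' ≤ (1 + τ * L) * gridError M u v + δ := by
  refine gridError_le_iff.2 fun i hi => ?_
  let z := semiLagrangianStep a h M τ Φ v (d i)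
  calc ‖u' i - v' i‖ ≤ ‖u' i - z‖ + ‖v' i - z‖ := by
        simpa only [norm_sub_rev z] using norm_sub_le_norm_sub_add_norm_sub (u' i) z (v' i)
    _ ≤ (1 + τ * L) * gridError M u v + δ := by
        rw [hu i hi]
        exact add_le_add
          (norm_semiLagrangianStep_sub_le hM hh hτ hL (hΦ _) (hd i hi) u v) (hv i hi)

end SemiLagrangian

/-- Maximum-error bound (part 3 of Theorem 3.5): if the local truncation error of the
one-step semi-Lagrangian method with respect to a function `y` is at most `τ·ε` at every
step and node, then
`max_i ‖u^k_i - y(t_k, x_i)‖_∞ ≤ e^{TL} max_i ‖u^0_i - y(0, x_i)‖_∞ + (ε/L)(e^{TL} - 1)`. -/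
theorem stmt_6 (n M N : ℕ) (hM : 1 ≤ M) (hN : 1 ≤ N)
    (a b T L : ℝ) (hab : a < b) (hT : 0 < T) (hL : 0 < L)
    (φ : ℝ → ℝ → (Fin n → ℝ) → ℝ → ℝ → (Fin n → ℝ))
    (hφ : ∀ (t x : ℝ) (w w' : Fin n → ℝ) (τ' h' : ℝ),
      ‖φ t x w τ' h' - φ t x w' τ' h'‖ ≤ L * ‖w - w'‖)
    (d : ℕ → ℕ → ℝ) (hd : ∀ k, k < N → ∀ i, i ≤ M → d k i ∈ Set.Icc a b)
    (y : ℝ → ℝ → (Fin n → ℝ)) (ε : ℝ) (hε : 0 ≤ ε)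
    (htrunc : ∀ k, k < N → ∀ i, i ≤ M →
      ‖y (((k : ℝ) + 1) * (T / N)) (a + (i : ℝ) * ((b - a) / M))
        - plin n a ((b - a) / M) M
            (fun j => y ((k : ℝ) * (T / N)) (a + (j : ℝ) * ((b - a) / M))) (d k i)
        - (T / N) • φ ((k : ℝ) * (T / N)) (d k i)
            (plin n a ((b - a) / M) M
              (fun j => y ((k : ℝ) * (T / N)) (a + (j : ℝ) * ((b - a) / M))) (d k i))
            (T / N) ((b - a) / M)‖ ≤ (T / N) * ε)
    (u : ℕ → ℕ → Fin n → ℝ)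
    (hu : ∀ k, k < N → ∀ i, i ≤ M → u (k + 1) i =
      plin n a ((b - a) / M) M (u k) (d k i)
        + (T / N) • φ ((k : ℝ) * (T / N)) (d k i)
            (plin n a ((b - a) / M) M (u k) (d k i)) (T / N) ((b - a) / M)) :
    ∀ k, k ≤ N → ∀ i, i ≤ M →
      ‖u k i - y ((k : ℝ) * (T / N)) (a + (i : ℝ) * ((b - a) / M))‖ ≤
        Real.exp (T * L) *
          (Finset.range (M + 1)).sup' Finset.nonempty_range_add_one
            (fun j => ‖u 0 j - y 0 (a + (j : ℝ) * ((b - a) / M))‖)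
        + (ε / L) * (Real.exp (T * L) - 1) := by
  have hM₀ : (0 : ℝ) < M := by exact_mod_cast hM
  have hN₀ : (0 : ℝ) < N := by exact_mod_cast hN
  have hh : 0 < (b - a) / M := div_pos (sub_pos.2 hab) hM₀
  have hτ : 0 < T / N := div_pos hT hN₀
  have hb : a + M * ((b - a) / M) = b := by rw [mul_div_cancel₀ _ hM₀.ne', add_sub_cancel]
  intro k hk i hi
  let Y (j i : ℕ) := y (j * (T / N)) (a + i * ((b - a) / M))
  have herror (j : ℕ) (hj : j < k) : gridError M (u (j + 1)) (Y (j + 1)) ≤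
      (1 + T / N * L) * gridError M (u j) (Y j) + T / N * ε := by
    have hjN : j < N := hj.trans_le hk
    refine gridError_semiLagrangianStep_le
      (Φ := fun x p => φ (j * (T / N)) x p (T / N) ((b - a) / M)) hM hh hτ.le hL.le
      (fun x p q => hφ _ x p q _ _) (hb.symm ▸ hd j hjN) (hu j hjN) fun i hi => ?_
    simpa only [Y, semiLagrangianStep, Nat.cast_succ, sub_sub] using htrunc j hjN i hi
  have htime : k * (T / N * L) ≤ T * L := calc
    k * (T / N * L) ≤ N * (T / N * L) := by gcongr
    _ = T * L := by field_simp
  have hbound := le_exp_mul_add_of_succ_le_one_add_mul_add (e := fun j => gridError M (u j) (Y j))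
    (mul_pos hτ hL) (mul_nonneg hτ.le hε) gridError_nonneg herror htime
  rw [mul_div_mul_left _ _ hτ.ne'] at hbound
  simpa only [gridError, Y, Nat.cast_zero, zero_mul] using (norm_sub_le_gridError hi).trans hbound
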